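/- Let r, p ∈ ℕ with r ≥ 2, and define on R the generators W¹ = D_x, W² = M_{x²}∘D_x + r·M_{xy}∘D_y − p·M_x, W³ = M_x∘D_x − (p/2)·id, W⁴ = M_y∘D_y, and W^{5+i} = M_{xⁱ}∘D_y for 0 ≤ i ≤ r. For every k ∈ ℕ, the ℂ-subspace of End(R) spanned by all compositions of at most k elements of {W¹, …, W^{5+r}} (the empty composition being the identity) has dimension d_k satisfying 6·d_k = Σ_{t=0}^{k} (t+1)(t+2)((r+2)t+3). -/

import Mathlib

noncomputable section

open MvPolynomial

/-- The bivariate polynomial ring `R = ℂ[x,y]`. -/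
abbrev R2 : Type := MvPolynomial (Fin 2) ℂ

/-- The variable `x`. -/
def Xv : R2 := X 0

/-- The variable `y`. -/
def Yv : R2 := X 1

/-- The partial derivative `∂_x` as a `ℂ`-linear endomorphism. -/
def Dx : Module.End ℂ R2 := (pderiv (0 : Fin 2)).toLinearMap

/-- The partial derivative `∂_y` as a `ℂ`-linear endomorphism. -/
def Dy : Module.End ℂ R2 := (pderiv (1 : Fin 2)).toLinearMap

/-- Multiplication by `f` as an endomorphism. -/
def Mf (f : R2) : Module.End ℂ R2 := LinearMap.mulLeft ℂ f

/-- All compositions (products) of at most `k` elements of `S`; the empty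
composition is the identity. -/
def prodsLE (k : ℕ) (S : Set (Module.End ℂ R2)) : Set (Module.End ℂ R2) :=
  {T | ∃ l : List (Module.End ℂ R2), l.length ≤ k ∧ (∀ a ∈ l, a ∈ S) ∧ l.prod = T}

/-- The rectangular module `ℛ_{n,m}`. -/
def Rmod (n m : ℕ) : Submodule ℂ R2 :=
  Submodule.span ℂ {P : R2 | ∃ i j : ℕ, i ≤ n ∧ j ≤ m ∧ P = Xv ^ i * Yv ^ j}

/-- The triangular module `𝒯ₙ`. -/
def Tmod (n : ℕ) : Submodule ℂ R2 :=
  Submodule.span ℂ {P : R2 | ∃ i j : ℕ, i + j ≤ n ∧ P = Xv ^ i * Yv ^ j}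

/-- The staircase module `𝒮^r_{p,q}`. -/
def Smod (r p q : ℕ) : Submodule ℂ R2 :=
  Submodule.span ℂ {P : R2 | ∃ i j : ℕ, i + r * j ≤ p ∧ j ≤ q ∧ P = Xv ^ i * Yv ^ j}

/-- An endomorphism has nonpositive `y`-degree if it maps each monomial `xᵃyᵇ`
into the span of the monomials `x^c y^e` with `e ≤ b`. -/
def NonposY (T : Module.End ℂ R2) : Prop :=
  ∀ a b : ℕ, T (Xv ^ a * Yv ^ b) ∈
    Submodule.span ℂ {P : R2 | ∃ c e : ℕ, e ≤ b ∧ P = Xv ^ c * Yv ^ e}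

/-- `W¹ = D_x`. -/
def W1 : Module.End ℂ R2 := Dx

/-- `W² = M_{x²}∘D_x + r·M_{xy}∘D_y − p·M_x`. -/
def W2 (r p : ℕ) : Module.End ℂ R2 :=
  Mf (Xv ^ 2) * Dx + (r : ℂ) • (Mf (Xv * Yv) * Dy) - (p : ℂ) • Mf Xv

/-- `W³ = M_x∘D_x − (p/2)·id`. -/
def W3 (p : ℕ) : Module.End ℂ R2 := Mf Xv * Dx - ((p : ℂ) / 2) • 1

/-- `W⁴ = M_y∘D_y`. -/
def W4 : Module.End ℂ R2 := Mf Yv * Dy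

/-- `W^{5+i} = M_{xⁱ}∘D_y`. -/
def W5i (i : ℕ) : Module.End ℂ R2 := Mf (Xv ^ i) * Dy

/-- The generating set `{W¹, …, W^{5+r}}` of the realization `𝔤^{24,r}_p`. -/
def Wset (r p : ℕ) : Set (Module.End ℂ R2) :=
  {W1, W2 r p, W3 p, W4} ∪ {T | ∃ i ≤ r, T = W5i i}

/-!
An operator that shifts exponents by `(c, -m)` sends `xᵃyᵇ` to `h(a, b) xᵃ⁺ᶜyᵇ⁻ᵐ` for a symbol `h`,
and the generators are such operators with symbols of degree at most one. Composing an operator with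
a generator on the left multiplies its symbol by an affine polynomial, so compositions of at most
`k` generators have symbols of degree at most `k`. Moreover, every occurring symbol of shift
`(m, c)` is divisible by the one produced by the shortest composition reaching that shift: it is
`y(y-1)⋯(y-m+1)`, times one affine factor for each `W¹` or `W²` needed when `c` lies outside
`[0, rm]`. Conversely, composing this shortest operator on the right with powers of `M_x D_x` and
`M_y D_y` realizes all its multiples. Operators with different shifts are independent, so the
dimension is a number of lattice points `(m, c, i, j)`, of which exactly
`(t+1)(t+2)((r+2)t+3)/6` have order `t`.
-/

/-- The operator `W²` with an arbitrary complex weight `q` in place of `p`. -/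
def weightW2 (r : ℕ) (q : ℂ) : Module.End ℂ R2 :=
  Mf (Xv ^ 2) * Dx + (r : ℂ) • (Mf (Xv * Yv) * Dy) - q • Mf Xv

/-- The operator `W³` with an arbitrary complex weight `q` in place of `p`. -/
def weightW3 (q : ℂ) : Module.End ℂ R2 := Mf Xv * Dx - (q / 2) • 1

/-- The generators of the realization with an arbitrary complex weight `q`, so that
`Wset r p` is `weightWset r p`. -/
def weightWset (r : ℕ) (q : ℂ) : Set (Module.End ℂ R2) :=
  {W1, weightW2 r q, weightW3 q, W4} ∪ {T | ∃ i ≤ r, T = W5i i}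

section Monomials

/-- The monomials `xᵃyᵇ` as a basis of `ℂ[x,y]`. -/
def xyBasis : Module.Basis (ℕ × ℕ) ℂ R2 :=
  (basisMonomials (Fin 2) ℂ).reindex (Finsupp.equivFunOnFinite.trans (finTwoArrowEquiv ℕ))

lemma monomial_eq_smul (s : Fin 2 →₀ ℕ) (z : ℂ) :
    monomial s z = z • (Xv ^ s 0 * Yv ^ s 1) := by
  rw [monomial_eq, Finsupp.prod_fintype _ _ fun _ => pow_zero _, Fin.prod_univ_two, smul_eq_C_mul]
  rfl

lemma xyBasis_apply (x : ℕ × ℕ) : xyBasis x = Xv ^ x.1 * Yv ^ x.2 := by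
  simp [xyBasis, monomial_eq_smul]

lemma xyBasis_repr (a b : ℕ) :
    xyBasis.repr (Xv ^ a * Yv ^ b) = Finsupp.single (a, b) 1 := by
  rw [← xyBasis.repr_self, xyBasis_apply]

lemma linearMap_ext_xy {M : Type*} [AddCommMonoid M] [Module ℂ M] {S T : R2 →ₗ[ℂ] M}
    (h : ∀ a b, S (Xv ^ a * Yv ^ b) = T (Xv ^ a * Yv ^ b)) : S = T :=
  xyBasis.ext fun x => by simpa only [xyBasis_apply] using h x.1 x.2

lemma mem_Tmod_of_totalDegree_le {g : R2} {n : ℕ} (hg : g.totalDegree ≤ n) : g ∈ Tmod n := by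
  rw [g.as_sum]
  refine Submodule.sum_mem _ fun s hs => ?_
  rw [monomial_eq_smul]
  refine Submodule.smul_mem _ _ (Submodule.subset_span ⟨s 0, s 1, ?_, rfl⟩)
  have hs' := (le_totalDegree hs).trans hg
  rwa [Finsupp.sum_fintype _ _ fun _ => rfl, Fin.sum_univ_two] at hs'

lemma Dx_monomial (a b : ℕ) : Dx (Xv ^ a * Yv ^ b) = (a : ℂ) • (Xv ^ (a - 1) * Yv ^ b) := by
  simp [Dx, Xv, Yv, Derivation.leibniz, Derivation.leibniz_pow, Nat.cast_smul_eq_nsmul, mul_comm,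
    mul_assoc]

lemma Dy_monomial (a b : ℕ) : Dy (Xv ^ a * Yv ^ b) = (b : ℂ) • (Xv ^ a * Yv ^ (b - 1)) := by
  simp [Dy, Xv, Yv, Derivation.leibniz, Derivation.leibniz_pow, Nat.cast_smul_eq_nsmul,
    mul_left_comm]

lemma Mf_mul_Xv_mul_Dx_monomial (f : R2) (a b : ℕ) :
    (Mf (f * Xv) * Dx) (Xv ^ a * Yv ^ b) = (a : ℂ) • (f * (Xv ^ a * Yv ^ b)) := by
  rw [Module.End.mul_apply, Dx_monomial, map_smul]
  cases a with
  | zero => simp only [Nat.cast_zero, zero_smul]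
  | succ a => simp only [Mf, LinearMap.mulLeft_apply, Nat.add_sub_cancel]; ring_nf

lemma Mf_mul_Yv_mul_Dy_monomial (f : R2) (a b : ℕ) :
    (Mf (f * Yv) * Dy) (Xv ^ a * Yv ^ b) = (b : ℂ) • (f * (Xv ^ a * Yv ^ b)) := by
  rw [Module.End.mul_apply, Dy_monomial, map_smul]
  cases b with
  | zero => simp only [Nat.cast_zero, zero_smul]
  | succ b => simp only [Mf, LinearMap.mulLeft_apply, Nat.add_sub_cancel]; ring_nf

lemma Mf_Xv_mul_Dx_monomial (a b : ℕ) :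
    (Mf Xv * Dx) (Xv ^ a * Yv ^ b) = (a : ℂ) • (Xv ^ a * Yv ^ b) := by
  simpa only [one_mul] using Mf_mul_Xv_mul_Dx_monomial 1 a b

lemma W4_monomial (a b : ℕ) : W4 (Xv ^ a * Yv ^ b) = (b : ℂ) • (Xv ^ a * Yv ^ b) := by
  simpa only [one_mul, W4] using Mf_mul_Yv_mul_Dy_monomial 1 a b

lemma W5i_monomial (i a b : ℕ) :
    W5i i (Xv ^ a * Yv ^ b) = (b : ℂ) • (Xv ^ (a + i) * Yv ^ (b - 1)) := by
  rw [W5i, Module.End.mul_apply, Dy_monomial, map_smul, Mf, LinearMap.mulLeft_apply,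
    pow_add]
  ring_nf

lemma weightW2_monomial (r : ℕ) (q : ℂ) (a b : ℕ) :
    weightW2 r q (Xv ^ a * Yv ^ b) = ((a : ℂ) + r * b - q) • (Xv ^ (a + 1) * Yv ^ b) := by
  rw [weightW2, LinearMap.sub_apply, LinearMap.add_apply, LinearMap.smul_apply,
    LinearMap.smul_apply, sq, Mf_mul_Xv_mul_Dx_monomial, Mf_mul_Yv_mul_Dy_monomial, Mf,
    LinearMap.mulLeft_apply, ← mul_assoc, ← pow_succ']
  module

lemma weightW3_monomial (q : ℂ) (a b : ℕ) :
    weightW3 q (Xv ^ a * Yv ^ b) = ((a : ℂ) - q / 2) • (Xv ^ a * Yv ^ b) := by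
  rw [weightW3, LinearMap.sub_apply, Mf_Xv_mul_Dx_monomial, LinearMap.smul_apply,
    Module.End.one_apply, sub_smul]

end Monomials

section ShiftOperators

/-- The operator `xᵃyᵇ ↦ h(a, b) xᵃ⁺ᶜyᵇ⁻ᵐ` with symbol `h`. The exponents `a + c` and `b - m` are
truncated at `0`; this is harmless for the symbols used here, which vanish where truncation
occurs. -/
def shiftOp (m : ℕ) (c : ℤ) : R2 →ₗ[ℂ] Module.End ℂ R2 :=
  (xyBasis.constr ℂ).toLinearMap ∘ₗ LinearMap.pi fun x =>
    (aeval ![(x.1 : ℂ), (x.2 : ℂ)]).toLinearMap.smulRight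
      (Xv ^ ((x.1 : ℤ) + c).toNat * Yv ^ (x.2 - m))

lemma shiftOp_monomial (m : ℕ) (c : ℤ) (h : R2) (a b : ℕ) :
    shiftOp m c h (Xv ^ a * Yv ^ b) =
      eval ![(a : ℂ), (b : ℂ)] h • (Xv ^ ((a : ℤ) + c).toNat * Yv ^ (b - m)) := by
  have hbasis := xyBasis.constr_basis ℂ (fun x : ℕ × ℕ => eval ![(x.1 : ℂ), (x.2 : ℂ)] h •
    (Xv ^ ((x.1 : ℤ) + c).toNat * Yv ^ (x.2 - m))) (a, b)
  rwa [xyBasis_apply] at hbasis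

lemma xyBasis_repr_shiftOp_monomial (m : ℕ) (c : ℤ) (h : R2) (a b : ℕ) :
    xyBasis.repr (shiftOp m c h (Xv ^ a * Yv ^ b)) =
      Finsupp.single (((a : ℤ) + c).toNat, b - m) (eval ![(a : ℂ), (b : ℂ)] h) := by
  rw [shiftOp_monomial, map_smul, xyBasis_repr, Finsupp.smul_single_one]

lemma shiftOp_zero_zero_one : shiftOp 0 0 1 = 1 :=
  linearMap_ext_xy fun a b => by simp [shiftOp_monomial]

/-- The linear polynomial `αx + βy + γ`. These are the symbols of the diagonal operators through
which the generators act. -/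
def affinePoly (α β γ : ℂ) : R2 := C α * Xv + C β * Yv + C γ

lemma eval_affinePoly (α β γ a b : ℂ) :
    eval ![a, b] (affinePoly α β γ) = α * a + β * b + γ := by
  simp [affinePoly, Xv, Yv]

lemma totalDegree_affinePoly_le (α β γ : ℂ) : (affinePoly α β γ).totalDegree ≤ 1 := by
  have hX (z : ℂ) (i : Fin 2) : (C z * X i : R2).totalDegree ≤ 1 :=
    (totalDegree_mul _ _).trans (by simp)
  refine (totalDegree_add _ _).trans (max_le ((totalDegree_add _ _).trans ?_) (by simp))
  exact max_le (hX α 0) (hX β 1)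

lemma totalDegree_affinePoly {α β : ℂ} (γ : ℂ) (h : α ≠ 0 ∨ β ≠ 0) :
    (affinePoly α β γ).totalDegree = 1 := by
  refine (totalDegree_affinePoly_le α β γ).antisymm (Nat.one_le_iff_ne_zero.2 fun h0 => ?_)
  obtain ⟨z, hz⟩ : ∃ z, affinePoly α β γ = C z := ⟨_, totalDegree_eq_zero_iff_eq_C.1 h0⟩
  have heval (a b : ℂ) : α * a + β * b + γ = z := by
    rw [← eval_affinePoly, hz, eval_C]
  have hα : α = 0 := by linear_combination heval 1 0 - heval 0 0
  have hβ : β = 0 := by linear_combination heval 0 1 - heval 0 0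
  exact h.elim (· hα) (· hβ)

lemma affinePoly_ne_zero {α β : ℂ} (γ : ℂ) (h : α ≠ 0 ∨ β ≠ 0) : affinePoly α β γ ≠ 0 := by
  intro h0
  simpa [h0] using totalDegree_affinePoly γ h

lemma shiftOp_mul_euler (m : ℕ) (c : ℤ) (h : R2) :
    shiftOp m c h * (Mf Xv * Dx) = shiftOp m c (h * Xv) :=
  linearMap_ext_xy fun a b => by
    rw [Module.End.mul_apply, Mf_Xv_mul_Dx_monomial, map_smul, shiftOp_monomial,
      shiftOp_monomial, smul_smul]
    simp [Xv, mul_comm]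

lemma shiftOp_mul_W4 (m : ℕ) (c : ℤ) (h : R2) :
    shiftOp m c h * W4 = shiftOp m c (h * Yv) :=
  linearMap_ext_xy fun a b => by
    rw [Module.End.mul_apply, W4_monomial, map_smul, shiftOp_monomial, shiftOp_monomial,
      smul_smul]
    simp [Yv, mul_comm]

lemma shiftOp_mul_monomial (m : ℕ) (c : ℤ) (h : R2) (i j : ℕ) :
    shiftOp m c (h * (Xv ^ i * Yv ^ j)) = shiftOp m c h * (Mf Xv * Dx) ^ i * W4 ^ j := by
  induction j with
  | zero =>
    induction i with
    | zero => simp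
    | succ i ih =>
      simp only [pow_zero, mul_one] at ih ⊢
      rw [pow_succ, ← mul_assoc, ← shiftOp_mul_euler, ih, pow_succ, mul_assoc]
  | succ j ih =>
    rw [pow_succ, ← mul_assoc, ← mul_assoc, ← shiftOp_mul_W4, mul_assoc, ih, pow_succ,
      mul_assoc _ (W4 ^ j)]

lemma mul_shiftOp {W : Module.End ℂ R2} {m m' : ℕ} {c c' : ℤ} {h l : R2}
    (hh : ∀ a b : ℕ, (a : ℤ) + c < 0 ∨ b < m → eval ![(a : ℂ), (b : ℂ)] h = 0)
    (hW : ∀ a d n : ℕ, (a : ℤ) + c = n → W (Xv ^ n * Yv ^ d) =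
      eval ![(a : ℂ), ((d + m : ℕ) : ℂ)] l • (Xv ^ ((a : ℤ) + c').toNat * Yv ^ (d + m - m'))) :
    W * shiftOp m c h = shiftOp m' c' (l * h) := by
  refine linearMap_ext_xy fun a b => ?_
  rw [Module.End.mul_apply, shiftOp_monomial, shiftOp_monomial, map_smul, map_mul (eval _)]
  by_cases hab : (a : ℤ) + c < 0 ∨ b < m
  · rw [hh a b hab, zero_smul, mul_zero, zero_smul]
  · obtain ⟨hac, hb⟩ := not_or.1 hab
    obtain ⟨d, rfl⟩ := Nat.exists_eq_add_of_le' (not_lt.1 hb)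
    rw [Nat.add_sub_cancel, hW a d _ (Int.toNat_of_nonneg (not_lt.1 hac)).symm, smul_smul,
      mul_comm]

lemma infinite_setOf_natCast_gt (N : ℕ) : {z : ℂ | ∃ n : ℕ, N < n ∧ z = n}.Infinite := by
  refine ((Set.Ioi_infinite N).image Nat.cast_injective.injOn).mono ?_
  rintro _ ⟨n, hn, rfl⟩
  exact ⟨n, hn, rfl⟩

/-- Distinct shifts move a monomial with large exponents to distinct monomials, so the coefficients
of the image are values of the individual symbols, and these values determine the symbols. -/
theorem lsum_shiftOp_injective :
    Function.Injective (Finsupp.lsum ℂ fun x : ℕ × ℤ => shiftOp x.1 x.2) := by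
  refine (injective_iff_map_eq_zero _).2 fun f hf => Finsupp.ext fun ⟨m, c⟩ => ?_
  refine funext_set ![{z : ℂ | ∃ n : ℕ, c.natAbs < n ∧ z = n}, {z : ℂ | ∃ n : ℕ, m < n ∧ z = n}]
    (Fin.forall_fin_two.2 ⟨infinite_setOf_natCast_gt _, infinite_setOf_natCast_gt _⟩) fun z hz => ?_
  obtain ⟨a, ha, hza⟩ := hz 0 trivial
  obtain ⟨b, hb, hzb⟩ := hz 1 trivial
  obtain rfl : z = ![(a : ℂ), (b : ℂ)] := by
    ext i; fin_cases i <;> assumption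
  have hcoeff := congrArg
    (fun T : Module.End ℂ R2 => xyBasis.repr (T (Xv ^ a * Yv ^ b)) (((a : ℤ) + c).toNat, b - m)) hf
  have hne : ∀ x ∈ f.support, x ≠ (m, c) →
      xyBasis.repr (shiftOp x.1 x.2 (f x) (Xv ^ a * Yv ^ b)) (((a : ℤ) + c).toNat, b - m) = 0 := by
    rintro ⟨m', c'⟩ - hx
    rw [xyBasis_repr_shiftOp_monomial]
    refine Finsupp.single_eq_of_ne ?_
    rw [Ne, Prod.mk.injEq] at hx ⊢
    omega
  simp only [Finsupp.lsum_apply, Finsupp.sum, LinearMap.sum_apply, map_sum, Finsupp.finsetSum_apply,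
    LinearMap.zero_apply, map_zero, Finsupp.zero_apply] at hcoeff
  rw [Finset.sum_eq_single (m, c) hne fun hx => by simp [Finsupp.notMem_support_iff.1 hx],
    xyBasis_repr_shiftOp_monomial, Finsupp.single_eq_same] at hcoeff
  simpa using hcoeff

end ShiftOperators

section MinimalSymbols

/-- The symbol of `W⁵⁺ⁱ¹ ⋯ W⁵⁺ⁱᵐ`, followed by powers of `W¹` if `c < 0` and of `W²` if `c > r m`:
every symbol of shift `(m, c)` that arises from the generators is a multiple of it. -/
def minSymbol (r : ℕ) (q : ℂ) (m : ℕ) (c : ℤ) : R2 :=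
  (∏ u ∈ Finset.range (-c).toNat, affinePoly 1 0 (-u)) *
    (∏ u ∈ Finset.range (c - r * m).toNat, affinePoly 1 r (u - q)) *
    ∏ u ∈ Finset.range m, affinePoly 0 1 (-u)

/-- The number of factors `W¹` and `W²` needed to reach the `x`-shift `c`, which is the distance
from `c` to the interval `[0, r m]` of shifts reached by `m` factors `W⁵⁺ⁱ`. -/
def excess (r m : ℕ) (c : ℤ) : ℕ := (-c).toNat + (c - r * m).toNat

variable {r m : ℕ} {q : ℂ} {c c' : ℤ} {h : R2}

lemma totalDegree_finsetProd_of_ne_zero {ι σ R : Type*} [CommSemiring R] [NoZeroDivisors R]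
    [Nontrivial R] (s : Finset ι) {f : ι → MvPolynomial σ R} (hf : ∀ i ∈ s, f i ≠ 0) :
    (∏ i ∈ s, f i).totalDegree = ∑ i ∈ s, (f i).totalDegree := by
  induction s using Finset.cons_induction with
  | empty => simp
  | cons i s hi ih =>
    obtain ⟨hfi, hfs⟩ := (Finset.forall_mem_cons hi _).1 hf
    rw [Finset.prod_cons, Finset.sum_cons,
      totalDegree_mul_of_isDomain hfi (Finset.prod_ne_zero_iff.2 hfs), ih hfs]

lemma prod_affinePoly_ne_zero {α β : ℂ} (hαβ : α ≠ 0 ∨ β ≠ 0) (γ : ℕ → ℂ) (n : ℕ) :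
    ∏ u ∈ Finset.range n, affinePoly α β (γ u) ≠ 0 :=
  Finset.prod_ne_zero_iff.2 fun _ _ => affinePoly_ne_zero _ hαβ

lemma totalDegree_prod_affinePoly {α β : ℂ} (hαβ : α ≠ 0 ∨ β ≠ 0) (γ : ℕ → ℂ) (n : ℕ) :
    (∏ u ∈ Finset.range n, affinePoly α β (γ u)).totalDegree = n := by
  rw [totalDegree_finsetProd_of_ne_zero _ fun _ _ => affinePoly_ne_zero _ hαβ]
  simp [totalDegree_affinePoly _ hαβ]

lemma minSymbol_ne_zero (r : ℕ) (q : ℂ) (m : ℕ) (c : ℤ) : minSymbol r q m c ≠ 0 :=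
  mul_ne_zero (mul_ne_zero (prod_affinePoly_ne_zero (.inl one_ne_zero) _ _)
    (prod_affinePoly_ne_zero (.inl one_ne_zero) _ _))
    (prod_affinePoly_ne_zero (.inr one_ne_zero) _ _)

lemma totalDegree_minSymbol (r : ℕ) (q : ℂ) (m : ℕ) (c : ℤ) :
    (minSymbol r q m c).totalDegree = m + excess r m c := by
  obtain ⟨hlowhigh, hy⟩ := mul_ne_zero_iff.1 (minSymbol_ne_zero r q m c)
  obtain ⟨hlow, hhigh⟩ := mul_ne_zero_iff.1 hlowhigh
  rw [minSymbol, totalDegree_mul_of_isDomain hlowhigh hy, totalDegree_mul_of_isDomain hlow hhigh,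
    totalDegree_prod_affinePoly (.inl one_ne_zero), totalDegree_prod_affinePoly (.inl one_ne_zero),
    totalDegree_prod_affinePoly (.inr one_ne_zero), excess, add_comm]

lemma minSymbol_dvd_minSymbol (hlow : (-c').toNat ≤ (-c).toNat)
    (hhigh : (c' - r * m).toNat ≤ (c - r * m).toNat) :
    minSymbol r q m c' ∣ minSymbol r q m c :=
  mul_dvd_mul_right (mul_dvd_mul
    (Finset.prod_dvd_prod_of_subset _ _ _ (Finset.range_mono hlow))
    (Finset.prod_dvd_prod_of_subset _ _ _ (Finset.range_mono hhigh))) _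

lemma minSymbol_of_mem_Icc (hc : c ∈ Set.Icc (0 : ℤ) (r * m)) :
    minSymbol r q m c = ∏ u ∈ Finset.range m, affinePoly 0 1 (-u) := by
  rw [minSymbol, Int.toNat_of_nonpos (neg_nonpos.2 hc.1), Int.toNat_of_nonpos (sub_nonpos.2 hc.2)]
  simp

lemma excess_of_mem_Icc (hc : c ∈ Set.Icc (0 : ℤ) (r * m)) : excess r m c = 0 := by
  rw [excess, Int.toNat_of_nonpos (neg_nonpos.2 hc.1), Int.toNat_of_nonpos (sub_nonpos.2 hc.2)]

lemma excess_sub_one (hc : c ≤ 0) : excess r m (c - 1) = excess r m c + 1 := by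
  have hrm : (0 : ℤ) ≤ r * m := by positivity
  simp only [excess]
  omega

lemma excess_add_one (hc : r * m ≤ c) : excess r m (c + 1) = excess r m c + 1 := by
  have hrm : (0 : ℤ) ≤ r * m := by positivity
  simp only [excess]
  omega

lemma minSymbol_sub_one (hc : c ≤ 0) :
    minSymbol r q m (c - 1) = affinePoly 1 0 c * minSymbol r q m c := by
  obtain ⟨s, rfl⟩ := Int.exists_eq_neg_ofNat hc
  have hrm : (0 : ℤ) ≤ r * m := by positivity
  rw [minSymbol, minSymbol, show (-(-(s : ℤ) - 1)).toNat = s + 1 by omega,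
    show (-(-(s : ℤ))).toNat = s by omega, Int.toNat_of_nonpos (by omega),
    Int.toNat_of_nonpos (by omega), Finset.prod_range_succ, Int.cast_neg, Int.cast_natCast]
  ring

lemma minSymbol_add_one (hc : r * m ≤ c) :
    minSymbol r q m (c + 1) = affinePoly 1 r (c - r * m - q) * minSymbol r q m c := by
  obtain ⟨t, rfl⟩ := Int.le.dest hc
  have hrm : (0 : ℤ) ≤ r * m := by positivity
  have hconst : ((r * m + t : ℤ) : ℂ) - r * m = t := by push_cast; ring
  rw [minSymbol, minSymbol, show (-(r * m + t + 1 : ℤ)).toNat = 0 by omega,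
    show (-(r * m + t : ℤ)).toNat = 0 by omega,
    show ((r * m + t + 1 - r * m : ℤ)).toNat = t + 1 by omega,
    show ((r * m + t - r * m : ℤ)).toNat = t by omega, Finset.prod_range_succ, hconst]
  ring

lemma minSymbol_sub_one_dvd (r : ℕ) (q : ℂ) (m : ℕ) (c : ℤ) :
    minSymbol r q m (c - 1) ∣ affinePoly 1 0 c * minSymbol r q m c := by
  rcases le_or_gt c 0 with hc | hc
  · rw [minSymbol_sub_one hc]
  · exact (minSymbol_dvd_minSymbol (by omega) (by omega)).mul_left _

lemma minSymbol_add_one_dvd (r : ℕ) (q : ℂ) (m : ℕ) (c : ℤ) :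
    minSymbol r q m (c + 1) ∣ affinePoly 1 r (c - r * m - q) * minSymbol r q m c := by
  rcases le_or_gt (r * m : ℤ) c with hc | hc
  · rw [minSymbol_add_one hc]
  · exact (minSymbol_dvd_minSymbol (by omega) (by omega)).mul_left _

lemma minSymbol_succ_dvd {i : ℕ} (hi : i ≤ r) (q : ℂ) (m : ℕ) (c : ℤ) :
    minSymbol r q (m + 1) (c + i) ∣ affinePoly 0 1 (-m) * minSymbol r q m c := by
  rw [minSymbol, minSymbol, Nat.cast_succ, mul_add_one, mul_left_comm, mul_comm (affinePoly _ _ _),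
    ← Finset.prod_range_succ]
  exact mul_dvd_mul_right (mul_dvd_mul
    (Finset.prod_dvd_prod_of_subset _ _ _ (Finset.range_mono (by omega)))
    (Finset.prod_dvd_prod_of_subset _ _ _ (Finset.range_mono (by omega)))) _

lemma eval_eq_zero_of_minSymbol_dvd (hh : minSymbol r q m c ∣ h) (a b : ℕ)
    (hab : (a : ℤ) + c < 0 ∨ b < m) : eval ![(a : ℂ), (b : ℂ)] h = 0 := by
  obtain ⟨g, rfl⟩ := hh
  rw [minSymbol, map_mul, map_mul, map_mul, map_prod, map_prod, map_prod]
  rcases hab with ha | hb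
  · rw [Finset.prod_eq_zero (Finset.mem_range.2 (show a < (-c).toNat by omega))]
    · simp
    · simp [eval_affinePoly]
  · rw [Finset.prod_eq_zero (s := Finset.range m) (Finset.mem_range.2 hb)]
    · simp
    · simp [eval_affinePoly]

end MinimalSymbols

section GeneratorAction

variable {r m : ℕ} {q : ℂ} {c : ℤ} {h : R2}

lemma W1_mul_shiftOp (hh : minSymbol r q m c ∣ h) :
    W1 * shiftOp m c h = shiftOp m (c - 1) (affinePoly 1 0 c * h) :=
  mul_shiftOp (eval_eq_zero_of_minSymbol_dvd hh) fun a d n hn => by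
    obtain rfl : c = n - a := by omega
    rw [W1, Dx_monomial, eval_affinePoly, Nat.add_sub_cancel,
      show ((a : ℤ) + (n - a - 1)).toNat = n - 1 by omega]
    congr 1
    push_cast
    ring

lemma weightW2_mul_shiftOp (hh : minSymbol r q m c ∣ h) :
    weightW2 r q * shiftOp m c h = shiftOp m (c + 1) (affinePoly 1 r (c - r * m - q) * h) :=
  mul_shiftOp (eval_eq_zero_of_minSymbol_dvd hh) fun a d n hn => by
    obtain rfl : c = n - a := by omega
    rw [weightW2_monomial, eval_affinePoly, Nat.add_sub_cancel,
      show ((a : ℤ) + (n - a + 1)).toNat = n + 1 by omega]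
    congr 1
    push_cast
    ring

lemma weightW3_mul_shiftOp (hh : minSymbol r q m c ∣ h) :
    weightW3 q * shiftOp m c h = shiftOp m c (affinePoly 1 0 (c - q / 2) * h) :=
  mul_shiftOp (eval_eq_zero_of_minSymbol_dvd hh) fun a d n hn => by
    obtain rfl : c = n - a := by omega
    rw [weightW3_monomial, eval_affinePoly, Nat.add_sub_cancel,
      show ((a : ℤ) + (n - a)).toNat = n by omega]
    congr 1
    push_cast
    ring

lemma W4_mul_shiftOp (hh : minSymbol r q m c ∣ h) :
    W4 * shiftOp m c h = shiftOp m c (affinePoly 0 1 (-m) * h) :=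
  mul_shiftOp (eval_eq_zero_of_minSymbol_dvd hh) fun a d n hn => by
    rw [W4_monomial, eval_affinePoly, Nat.add_sub_cancel, hn, Int.toNat_natCast]
    congr 1
    push_cast
    ring

lemma W5i_mul_shiftOp (i : ℕ) (hh : minSymbol r q m c ∣ h) :
    W5i i * shiftOp m c h = shiftOp (m + 1) (c + i) (affinePoly 0 1 (-m) * h) :=
  mul_shiftOp (eval_eq_zero_of_minSymbol_dvd hh) fun a d n hn => by
    rw [W5i_monomial, eval_affinePoly, show d + m - (m + 1) = d - 1 by omega,
      show ((a : ℤ) + (c + i)).toNat = n + i by omega]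
    congr 1
    push_cast
    ring

end GeneratorAction

section Filtration

/-- Operators of order at most `k` in the generators, described by their symbols. -/
def symbolFiltration (r : ℕ) (q : ℂ) (k : ℕ) : Submodule ℂ (Module.End ℂ R2) :=
  Submodule.span ℂ {T | ∃ (m : ℕ) (c : ℤ) (h : R2),
    minSymbol r q m c ∣ h ∧ h.totalDegree ≤ k ∧ T = shiftOp m c h}

variable {r m : ℕ} {q : ℂ} {c : ℤ} {h : R2} {k : ℕ}

lemma shiftOp_mem_symbolFiltration (hh : minSymbol r q m c ∣ h) (hk : h.totalDegree ≤ k) :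
    shiftOp m c h ∈ symbolFiltration r q k :=
  Submodule.subset_span ⟨m, c, h, hh, hk, rfl⟩

lemma one_mem_symbolFiltration (r : ℕ) (q : ℂ) (k : ℕ) : 1 ∈ symbolFiltration r q k := by
  rw [← shiftOp_zero_zero_one]
  exact shiftOp_mem_symbolFiltration (by simp [minSymbol]) (by simp)

lemma shiftOp_affinePoly_mul_mem {m' : ℕ} {c' : ℤ} {α β γ : ℂ} (hh : minSymbol r q m c ∣ h)
    (hk : h.totalDegree ≤ k)
    (hdvd : minSymbol r q m' c' ∣ affinePoly α β γ * minSymbol r q m c) :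
    shiftOp m' c' (affinePoly α β γ * h) ∈ symbolFiltration r q (k + 1) := by
  refine shiftOp_mem_symbolFiltration (hdvd.trans (mul_dvd_mul_left _ hh)) ?_
  have hmul := totalDegree_mul (affinePoly α β γ) h
  have haff := totalDegree_affinePoly_le α β γ
  omega

lemma weightWset_mul_shiftOp_mem {W : Module.End ℂ R2} (hW : W ∈ weightWset r q)
    (hh : minSymbol r q m c ∣ h) (hk : h.totalDegree ≤ k) :
    W * shiftOp m c h ∈ symbolFiltration r q (k + 1) := by
  rcases hW with (rfl | rfl | rfl | rfl) | ⟨i, hi, rfl⟩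
  · rw [W1_mul_shiftOp hh]
    exact shiftOp_affinePoly_mul_mem hh hk (minSymbol_sub_one_dvd r q m c)
  · rw [weightW2_mul_shiftOp hh]
    exact shiftOp_affinePoly_mul_mem hh hk (minSymbol_add_one_dvd r q m c)
  · rw [weightW3_mul_shiftOp hh]
    exact shiftOp_affinePoly_mul_mem hh hk (dvd_mul_left _ _)
  · rw [W4_mul_shiftOp hh]
    exact shiftOp_affinePoly_mul_mem hh hk (dvd_mul_left _ _)
  · rw [W5i_mul_shiftOp i hh]
    exact shiftOp_affinePoly_mul_mem hh hk (minSymbol_succ_dvd hi q m c)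

open scoped Pointwise in
lemma prodsLE_eq_pow (k : ℕ) (S : Set (Module.End ℂ R2)) : prodsLE k S = insert 1 S ^ k := by
  induction k with
  | zero =>
    ext T
    constructor
    · rintro ⟨l, hl, -, rfl⟩
      rw [List.eq_nil_of_length_eq_zero (Nat.le_zero.1 hl), List.prod_nil, pow_zero, Set.mem_one]
    · rintro rfl
      exact ⟨[], le_rfl, by simp, rfl⟩
  | succ k ih =>
    rw [pow_succ', ← ih]
    ext T
    constructor
    · rintro ⟨_ | ⟨a, l⟩, hlk, hlS, rfl⟩
      · exact ⟨1, .inl rfl, 1, ⟨[], Nat.zero_le k, by simp, rfl⟩, mul_one 1⟩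
      · obtain ⟨haS, hlS⟩ := List.forall_mem_cons.1 hlS
        exact ⟨a, .inr haS, l.prod, ⟨l, Nat.le_of_succ_le_succ hlk, hlS, rfl⟩, List.prod_cons.symm⟩
    · rintro ⟨_, rfl | ha, _, ⟨l, hlk, hlS, rfl⟩, rfl⟩
      · exact ⟨l, hlk.trans k.le_succ, hlS, (one_mul _).symm⟩
      · exact ⟨_ :: l, Nat.succ_le_succ hlk, List.forall_mem_cons.2 ⟨ha, hlS⟩, List.prod_cons⟩

/-- The span of the identity and the generators, whose `k`-th power is the space of operators of
order at most `k`. -/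
def genSpan (r : ℕ) (q : ℂ) : Submodule ℂ (Module.End ℂ R2) :=
  Submodule.span ℂ (insert 1 (weightWset r q))

lemma span_prodsLE_weightWset (r : ℕ) (q : ℂ) (k : ℕ) :
    Submodule.span ℂ (prodsLE k (weightWset r q)) = genSpan r q ^ k := by
  rw [genSpan, Submodule.span_pow, prodsLE_eq_pow]

lemma genSpan_pow_le_symbolFiltration (r : ℕ) (q : ℂ) (k : ℕ) :
    genSpan r q ^ k ≤ symbolFiltration r q k := by
  induction k with
  | zero => exact Submodule.one_le.2 (one_mem_symbolFiltration r q 0)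
  | succ k ih =>
    refine ((pow_succ' (genSpan r q) k).trans_le (mul_le_mul_right ih _)).trans ?_
    rw [genSpan, symbolFiltration, Submodule.span_mul_span, Submodule.span_le]
    rintro _ ⟨W, rfl | hW, _, ⟨m, c, h, hh, hk, rfl⟩, rfl⟩
    · beta_reduce
      rw [one_mul]
      exact shiftOp_mem_symbolFiltration hh (hk.trans k.le_succ)
    · exact weightWset_mul_shiftOp_mem hW hh hk

lemma one_mem_genSpan (r : ℕ) (q : ℂ) : 1 ∈ genSpan r q :=
  Submodule.subset_span (Set.mem_insert 1 _)

lemma genSpan_pow_mono (r : ℕ) (q : ℂ) {k l : ℕ} (hkl : k ≤ l) :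
    genSpan r q ^ k ≤ genSpan r q ^ l :=
  pow_le_pow_right' (M := Submodule ℂ (Module.End ℂ R2))
    (Submodule.one_le.2 (one_mem_genSpan r q)) hkl

lemma mem_genSpan_of_mem_weightWset {W : Module.End ℂ R2} (hW : W ∈ weightWset r q) :
    W ∈ genSpan r q :=
  Submodule.subset_span (Set.mem_insert_of_mem 1 hW)

lemma W4_mem_genSpan (r : ℕ) (q : ℂ) : W4 ∈ genSpan r q :=
  mem_genSpan_of_mem_weightWset (by simp [weightWset])

lemma euler_mem_genSpan (r : ℕ) (q : ℂ) : Mf Xv * Dx ∈ genSpan r q := by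
  have hW3 : weightW3 q ∈ genSpan r q := mem_genSpan_of_mem_weightWset (by simp [weightWset])
  rw [← sub_add_cancel (Mf Xv * Dx) ((q / 2) • 1)]
  exact add_mem hW3 (Submodule.smul_mem _ _ (one_mem_genSpan r q))

lemma mul_mem_genSpan_pow_succ {W T : Module.End ℂ R2} (hW : W ∈ weightWset r q)
    (hT : T ∈ genSpan r q ^ k) : W * T ∈ genSpan r q ^ (k + 1) :=
  (pow_succ' (genSpan r q) k).ge (Submodule.mul_mem_mul (mem_genSpan_of_mem_weightWset hW) hT)

lemma shiftOp_minSymbol_mem_of_mem_Icc (hc : c ∈ Set.Icc (0 : ℤ) (r * m)) :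
    shiftOp m c (minSymbol r q m c) ∈ genSpan r q ^ m := by
  induction m generalizing c with
  | zero =>
    obtain rfl : c = 0 := by simpa using hc
    rw [minSymbol_of_mem_Icc hc, Finset.prod_range_zero, shiftOp_zero_zero_one]
    exact Submodule.one_le.1 le_rfl
  | succ m ih =>
    obtain ⟨i, hi, hci⟩ : ∃ i ≤ r, c - (i : ℤ) ∈ Set.Icc (0 : ℤ) (r * m) := by
      obtain ⟨hc0, hcr⟩ := hc
      rw [Nat.cast_succ, mul_add_one] at hcr
      have hrm : (0 : ℤ) ≤ r * m := by positivity
      exact ⟨min c.toNat r, min_le_right _ _, by omega, by omega⟩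
    have hsymbol : minSymbol r q (m + 1) c = affinePoly 0 1 (-m) * minSymbol r q m (c - i) := by
      rw [minSymbol_of_mem_Icc hc, minSymbol_of_mem_Icc hci, Finset.prod_range_succ, mul_comm]
    rw [hsymbol, show shiftOp (m + 1) c = shiftOp (m + 1) (c - i + i) by rw [sub_add_cancel],
      ← W5i_mul_shiftOp i dvd_rfl]
    exact mul_mem_genSpan_pow_succ (.inr ⟨i, hi, rfl⟩) (ih hci)

lemma shiftOp_minSymbol_mem (r : ℕ) (q : ℂ) (m : ℕ) (c : ℤ) :
    shiftOp m c (minSymbol r q m c) ∈ genSpan r q ^ (m + excess r m c) := by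
  have hrm : (0 : ℤ) ≤ r * m := by positivity
  rcases le_total c 0 with hc | hc
  · induction c, hc using Int.leInductionDown with
    | base =>
      rw [excess_of_mem_Icc ⟨le_rfl, hrm⟩]
      exact shiftOp_minSymbol_mem_of_mem_Icc ⟨le_rfl, hrm⟩
    | pred c hc ih =>
      rw [minSymbol_sub_one hc, excess_sub_one hc, ← W1_mul_shiftOp dvd_rfl]
      exact mul_mem_genSpan_pow_succ (by simp [weightWset]) ih
  rcases le_total c (r * m) with hcr | hcr
  · rw [excess_of_mem_Icc ⟨hc, hcr⟩]
    exact shiftOp_minSymbol_mem_of_mem_Icc ⟨hc, hcr⟩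
  · induction c, hcr using Int.leInduction with
    | base =>
      rw [excess_of_mem_Icc ⟨hrm, le_rfl⟩]
      exact shiftOp_minSymbol_mem_of_mem_Icc ⟨hrm, le_rfl⟩
    | succ c hcr ih =>
      rw [minSymbol_add_one hcr, excess_add_one hcr, ← weightW2_mul_shiftOp dvd_rfl]
      exact mul_mem_genSpan_pow_succ (by simp [weightWset]) (ih (hrm.trans hcr))

end Filtration

section Basis

/-- The basis operator of shift `(m, c)` with symbol the multiple `xⁱyʲ` of the minimal one, where
`x = ((m, c), (i, j))`. -/
def basisOp (r : ℕ) (q : ℂ) (x : (ℕ × ℤ) × (ℕ × ℕ)) : Module.End ℂ R2 :=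
  shiftOp x.1.1 x.1.2 (minSymbol r q x.1.1 x.1.2 * (Xv ^ x.2.1 * Yv ^ x.2.2))

/-- The order of `basisOp r q x` in the generators, which is the degree of its symbol. -/
def basisOrder (r : ℕ) (x : (ℕ × ℤ) × (ℕ × ℕ)) : ℕ :=
  x.1.1 + excess r x.1.1 x.1.2 + (x.2.1 + x.2.2)

lemma basisOp_mem_genSpan_pow (r : ℕ) (q : ℂ) (x : (ℕ × ℤ) × (ℕ × ℕ)) :
    basisOp r q x ∈ genSpan r q ^ basisOrder r x := by
  obtain ⟨⟨m, c⟩, i, j⟩ := x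
  rw [basisOp, shiftOp_mul_monomial, mul_assoc]
  have hmul := Submodule.mul_mem_mul (shiftOp_minSymbol_mem r q m c)
    (Submodule.mul_mem_mul (Submodule.pow_mem_pow _ (euler_mem_genSpan r q) i)
      (Submodule.pow_mem_pow _ (W4_mem_genSpan r q) j))
  exact (((pow_add (genSpan r q) _ _).trans (congrArg _ (pow_add (genSpan r q) i j))).ge) hmul

lemma symbolFiltration_le_span_basisOp (r : ℕ) (q : ℂ) (k : ℕ) :
    symbolFiltration r q k ≤ Submodule.span ℂ (basisOp r q '' {x | basisOrder r x ≤ k}) := by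
  refine Submodule.span_le.2 ?_
  rintro _ ⟨m, c, _, ⟨g, rfl⟩, hk, rfl⟩
  rcases eq_or_ne g 0 with rfl | hg
  · simp
  rw [totalDegree_mul_of_isDomain (minSymbol_ne_zero r q m c) hg, totalDegree_minSymbol] at hk
  obtain ⟨n, rfl⟩ := Nat.exists_eq_add_of_le (Nat.le_of_add_right_le hk)
  have hTmod : g ∈ Tmod n := mem_Tmod_of_totalDegree_le (Nat.le_of_add_le_add_left hk)
  clear hg hk
  induction hTmod using Submodule.span_induction with
  | mem g hg =>
    obtain ⟨i, j, hij, rfl⟩ := hg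
    have hbasisOp : shiftOp m c (minSymbol r q m c * (Xv ^ i * Yv ^ j)) =
        basisOp r q ((m, c), (i, j)) := rfl
    rw [hbasisOp]
    exact Submodule.subset_span (Set.mem_image_of_mem _ (Nat.add_le_add_left hij _))
  | zero => simp
  | add g g' _ _ hg hg' =>
    rw [mul_add, map_add]
    exact add_mem hg hg'
  | smul z g _ hg =>
    rw [mul_smul_comm, map_smul]
    exact Submodule.smul_mem _ z hg

lemma span_prodsLE_weightWset_eq_span_basisOp (r : ℕ) (q : ℂ) (k : ℕ) :
    Submodule.span ℂ (prodsLE k (weightWset r q)) =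
      Submodule.span ℂ (basisOp r q '' {x | basisOrder r x ≤ k}) := by
  rw [span_prodsLE_weightWset]
  refine le_antisymm ((genSpan_pow_le_symbolFiltration r q k).trans
    (symbolFiltration_le_span_basisOp r q k)) (Submodule.span_le.2 ?_)
  rintro _ ⟨x, hx, rfl⟩
  exact genSpan_pow_mono r q hx (basisOp_mem_genSpan_pow r q x)

lemma linearIndependent_basisOp (r : ℕ) (q : ℂ) : LinearIndependent ℂ (basisOp r q) := by
  have hsymbols (x : ℕ × ℤ) : LinearIndependent ℂ fun y : ℕ × ℕ =>
      minSymbol r q x.1 x.2 * xyBasis y :=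
    xyBasis.linearIndependent.map' (LinearMap.mulLeft ℂ _)
      (LinearMap.ker_eq_bot.2 (mul_right_injective₀ (minSymbol_ne_zero r q x.1 x.2)))
  have hops := ((Finsupp.linearIndependent_single _ hsymbols).map' _
    (LinearMap.ker_eq_bot.2 lsum_shiftOp_injective)).comp _
    (Equiv.sigmaEquivProd (ℕ × ℤ) (ℕ × ℕ)).symm.injective
  have hbasisOp : basisOp r q = (Finsupp.lsum ℂ fun x : ℕ × ℤ => shiftOp x.1 x.2) ∘
      (fun z : Σ _ : ℕ × ℤ, ℕ × ℕ =>
        Finsupp.single z.1 (minSymbol r q z.1.1 z.1.2 * xyBasis z.2)) ∘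
      (Equiv.sigmaEquivProd (ℕ × ℤ) (ℕ × ℕ)).symm := by
    funext x
    simp only [Function.comp_apply, Equiv.sigmaEquivProd_symm_apply, Finsupp.lsum_single, basisOp,
      xyBasis_apply]
  rwa [hbasisOp]

lemma finrank_span_image_finset {ι K V : Type*} [Semiring K] [StrongRankCondition K] [Nontrivial K]
    [AddCommMonoid V] [Module K V] {v : ι → V} (hv : LinearIndependent K v) (s : Finset ι) :
    Module.finrank K (Submodule.span K (v '' s)) = s.card := by
  rw [Set.image_eq_range]
  exact (finrank_span_eq_card (hv.comp _ Subtype.val_injective)).trans (Fintype.card_coe s)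

end Basis

section Counting

open Finset.HasAntidiagonal

/-- The indices `((m, c), (i, j))` of order at most `k`, listed by their order `t = m + n` and by
`n = i + l`, where `l = excess r m c + j` ranges over the bounds of `excess r m c`. -/
def basisIndices (r k : ℕ) : Finset ((ℕ × ℤ) × (ℕ × ℕ)) :=
  ((Finset.range (k + 1)).sigma fun t => (antidiagonal t).sigma fun x =>
    (antidiagonal x.2).sigma fun y => Finset.Icc (-y.2 : ℤ) (r * x.1 + y.2)).image
    fun z => ((z.2.1.1, z.2.2.2), (z.2.2.1.1, z.2.2.1.2 - excess r z.2.1.1 z.2.2.2))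

lemma mem_Icc_iff_excess_le {r m l : ℕ} {c : ℤ} :
    c ∈ Finset.Icc (-l : ℤ) (r * m + l) ↔ excess r m c ≤ l := by
  have hrm : (0 : ℤ) ≤ r * m := by positivity
  rw [Finset.mem_Icc, excess]
  omega

lemma coe_basisIndices (r k : ℕ) : (basisIndices r k : Set _) = {x | basisOrder r x ≤ k} := by
  ext ⟨⟨m, c⟩, i, j⟩
  simp only [basisIndices, Finset.coe_image, Set.mem_image, Finset.mem_coe, Finset.mem_sigma,
    Finset.mem_range, mem_antidiagonal, mem_Icc_iff_excess_le, Prod.mk.injEq, basisOrder,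
    Set.mem_ofPred]
  constructor
  · rintro ⟨⟨t, ⟨m, n⟩, ⟨i, l⟩, c⟩, ⟨ht, hmn, hil, hl⟩, ⟨rfl, rfl⟩, rfl, rfl⟩
    dsimp only at *
    omega
  · intro h
    exact ⟨⟨m + excess r m c + (i + j), (m, excess r m c + (i + j)), (i, excess r m c + j), c⟩,
      by dsimp only; omega, by simp⟩

lemma card_basisIndices (r k : ℕ) : (basisIndices r k).card =
    ∑ t ∈ Finset.range (k + 1), ∑ x ∈ antidiagonal t, ∑ y ∈ antidiagonal x.2,
      (r * x.1 + 2 * y.2 + 1) := by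
  rw [basisIndices, Finset.card_image_of_injOn]
  · simp only [Finset.card_sigma, Int.card_Icc]
    congr! with t - x - y -
    have hrm : (0 : ℤ) ≤ r * x.1 := by positivity
    zify
    omega
  · rintro ⟨t, ⟨m, n⟩, ⟨i, l⟩, c⟩ hz ⟨t', ⟨m', n'⟩, ⟨i', l'⟩, c'⟩ hz' h
    simp only [Finset.coe_sigma, Set.mem_sigma_iff, Finset.mem_coe,
      Finset.mem_range, mem_antidiagonal, mem_Icc_iff_excess_le, Prod.mk.injEq] at hz hz' h
    obtain ⟨⟨rfl, rfl⟩, rfl, hl⟩ := h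
    obtain rfl : l = l' := by omega
    obtain rfl : n = n' := by omega
    obtain rfl : t = t' := by omega
    rfl

lemma sum_antidiagonal_add_two_mul_snd_add_one (a n : ℕ) :
    ∑ y ∈ antidiagonal n, (a + 2 * y.2 + 1) = (n + 1) * (a + n + 1) := by
  induction n with
  | zero => simp
  | succ n ih =>
    rw [Finset.Nat.sum_antidiagonal_succ, ih]
    ring

lemma two_mul_sum_antidiagonal_snd_add_one (t : ℕ) :
    2 * ∑ x ∈ antidiagonal t, (x.2 + 1) = (t + 1) * (t + 2) := by
  induction t with
  | zero => simp
  | succ t ih =>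
    rw [Finset.Nat.sum_antidiagonal_succ, mul_add, ih]
    ring

lemma six_mul_sum_antidiagonal (r t : ℕ) :
    6 * ∑ x ∈ antidiagonal t, (x.2 + 1) * (r * x.1 + x.2 + 1) =
      (t + 1) * (t + 2) * ((r + 2) * t + 3) := by
  induction t with
  | zero => simp
  | succ t ih =>
    have hsplit : ∑ x ∈ antidiagonal t, (x.2 + 1) * (r * (x.1 + 1) + x.2 + 1) =
        ∑ x ∈ antidiagonal t, (x.2 + 1) * (r * x.1 + x.2 + 1) +
          r * ∑ x ∈ antidiagonal t, (x.2 + 1) := by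
      rw [Finset.mul_sum, ← Finset.sum_add_distrib]
      exact Finset.sum_congr rfl fun x _ => by ring
    rw [Finset.Nat.sum_antidiagonal_succ, hsplit]
    linear_combination ih + 3 * r * two_mul_sum_antidiagonal_snd_add_one t

end Counting

theorem stmt11_general (r : ℕ) (q : ℂ) (k : ℕ) :
    6 * Module.finrank ℂ (Submodule.span ℂ (prodsLE k (weightWset r q))) =
      ∑ t ∈ Finset.range (k + 1), (t + 1) * (t + 2) * ((r + 2) * t + 3) := by
  rw [span_prodsLE_weightWset_eq_span_basisOp, ← coe_basisIndices,
    finrank_span_image_finset (linearIndependent_basisOp r q), card_basisIndices, Finset.mul_sum]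
  refine Finset.sum_congr rfl fun t _ => ?_
  simp only [sum_antidiagonal_add_two_mul_snd_add_one, six_mul_sum_antidiagonal]

theorem stmt11 (r p : ℕ) (hr : 2 ≤ r) (k : ℕ) :
    6 * Module.finrank ℂ ↥(Submodule.span ℂ (prodsLE k (Wset r p))) =
      ∑ t ∈ Finset.range (k + 1), (t + 1) * (t + 2) * ((r + 2) * t + 3) :=
  stmt11_general r p k
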